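/- Generalized Łoś–Tarski theorem GLT(k), extension-closed direction: let τ be a finite first-order vocabulary, V an FO(τ) theory, φ an FO(τ) sentence, and k a natural number. Then φ is k-extension closed modulo V if and only if φ is equivalent modulo V to a ∀^k∃* sentence, i.e., a prenex sentence of the form ∀x₁…∀x_k ∃y₁…∃y_n ψ for some n, with ψ quantifier-free. (All structures here are arbitrary, possibly infinite.) -/

import Mathlib

open FirstOrder Language

universe u v w

namespace GLTPaper

variable {L : FirstOrder.Language.{u, v}}

/-- Existentially quantify over the last `n` free (de Bruijn) variables of a bounded formula,
leaving the first `k` variables free. -/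
def exsFrom (k : ℕ) : ∀ {n : ℕ}, L.BoundedFormula Empty (k + n) → L.BoundedFormula Empty k
  | 0, ψ => ψ
  | _ + 1, ψ => exsFrom k ψ.ex

/-- The `∀^k∃*` sentence `∀x₁…∀x_k ∃y₁…∃y_n ψ` built from a quantifier-free matrix `ψ`. -/
def forallExistsSentence (k n : ℕ) (ψ : L.BoundedFormula Empty (k + n)) : L.Sentence :=
  (exsFrom k ψ).alls

/-- A `k`-ary cover of a structure `M` is a nonempty collection of (nonempty) substructures
of `M` such that every set of at most `k` elements of `M` is contained in some member. -/
def IsKAryCover (k : ℕ) {M : Type w} [L.Structure M] (R : Set (L.Substructure M)) : Prop :=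
  R.Nonempty ∧ (∀ N ∈ R, (N : Set M).Nonempty) ∧
    ∀ C : Finset M, C.card ≤ k → ∃ N ∈ R, (C : Set M) ⊆ (N : Set M)

/-- A sentence `φ` is `k`-extension closed modulo a theory `V` if every (nonempty) model `M`
of `V` admitting a `k`-ary cover all of whose members satisfy `V ∪ {φ}` itself satisfies `φ`. -/
def KExtensionClosed (V : L.Theory) (k : ℕ) (φ : L.Sentence) : Prop :=
  ∀ (M : Type w) [L.Structure M] [Nonempty M], M ⊨ V →
    ∀ R : Set (L.Substructure M), IsKAryCover k R →
      (∀ N ∈ R, (N : Type w) ⊨ V ∧ (N : Type w) ⊨ φ) → M ⊨ φ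

/-! Write `Γ` for the set of `∀^k∃*` consequences of `V ∪ {φ}`. If no finite part of `Γ` axiomatizes
`φ` over `V`, each of them has a countermodel `M n ⊨ V ∪ {¬φ}`, and a nonprincipal ultraproduct `P`
of these is a countably saturated model of `V ∪ Γ ∪ {¬φ}`. For a `k`-tuple `a` of `P`, compactness
and `P ⊨ Γ` give a countable `N ⊨ V ∪ {φ}` with a `k`-tuple `b` all of whose existential properties
hold of `a`; by saturation, `N` embeds in `P` with `b` going to `a`. The images of these embeddings
form a `k`-ary cover of `P` by models of `V ∪ {φ}`, so `P ⊨ φ` by `k`-extension closedness, a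
contradiction. Conversely, existential formulas pass from the members of a cover to the whole
structure. -/

open Filter FirstOrder.Language.BoundedFormula

section Prefixes

theorem realize_exsFrom (k : ℕ) {n : ℕ} (ψ : L.BoundedFormula Empty (k + n)) {M : Type*}
    [L.Structure M] (v : Empty → M) (a : Fin k → M) :
    (exsFrom k ψ).Realize v a ↔ ∃ y : Fin n → M, ψ.Realize v (Fin.append a y) := by
  induction n with
  | zero =>
    rw [Unique.exists_iff, Subsingleton.elim default Fin.elim0, Fin.append_elim0]
    rfl
  | succ n ih =>
    simp only [exsFrom, ih, realize_ex]
    constructor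
    · rintro ⟨y, z, h⟩
      exact ⟨Fin.snoc y z, by rwa [Fin.append_snoc]⟩
    · rintro ⟨y, h⟩
      refine ⟨Fin.init y, y (Fin.last n), ?_⟩
      rwa [← Fin.snoc_init_self y, Fin.append_snoc] at h

theorem isExistential_exsFrom (k : ℕ) {n : ℕ} {ψ : L.BoundedFormula Empty (k + n)}
    (hψ : ψ.IsExistential) : (exsFrom k ψ).IsExistential := by
  induction n with
  | zero => exact hψ
  | succ n ih => exact ih hψ.ex

theorem realize_forallExistsSentence {k n : ℕ} {ψ : L.BoundedFormula Empty (k + n)} {M : Type*}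
    [L.Structure M] (v : Empty → M) :
    M ⊨ forallExistsSentence k n ψ ↔ ∀ a : Fin k → M, (exsFrom k ψ).Realize v a := by
  rw [Subsingleton.elim v default]
  exact realize_alls

end Prefixes

section Covers

theorem exists_finset_subset_range {M : Type*} [Nonempty M] {k : ℕ} {C : Finset M}
    (hC : C.card ≤ k) : ∃ a : Fin k → M, (C : Set M) ⊆ Set.range a := by
  obtain ⟨e⟩ : Nonempty (C ↪ Fin k) := Function.Embedding.nonempty_of_card_le (by simpa using hC)
  refine ⟨Function.extend e Subtype.val fun _ => Classical.arbitrary M, fun x hx => ?_⟩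
  exact ⟨e ⟨x, hx⟩, e.injective.extend_apply _ _ _⟩

theorem isKAryCover_iff_forall_tuple {k : ℕ} {M : Type w} [L.Structure M] [Nonempty M]
    {R : Set (L.Substructure M)} :
    IsKAryCover k R ↔
      (∀ N ∈ R, (N : Set M).Nonempty) ∧ ∀ a : Fin k → M, ∃ N ∈ R, ∀ i, a i ∈ N := by
  classical
  constructor
  · rintro ⟨-, hne, hcov⟩
    refine ⟨hne, fun a => ?_⟩
    obtain ⟨N, hN, ha⟩ := hcov (Finset.univ.image a) (Finset.card_image_le.trans (by simp))
    exact ⟨N, hN, fun i => ha (by simp)⟩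
  · rintro ⟨hne, htuple⟩
    obtain ⟨N₀, hN₀, -⟩ := htuple fun _ => Classical.arbitrary M
    refine ⟨⟨N₀, hN₀⟩, hne, fun C hC => ?_⟩
    obtain ⟨a, ha⟩ := exists_finset_subset_range hC
    obtain ⟨N, hN, haN⟩ := htuple a
    exact ⟨N, hN, ha.trans (Set.range_subset_iff.2 haN)⟩

end Covers

section Existential

variable {α : Type*} {M N : Type*} [L.Structure M] [L.Structure N]

/-- The tuple `a` satisfies the existential formula `∃ y₀ y₁ …, θ(a, y₀, y₁, …)`. Only finitely many
of the quantified variables occur in `θ`; allowing the index set `ℕ` makes it possible to combine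
existential formulas without counting their variables. -/
def ExRealize (θ : L.Formula (α ⊕ ℕ)) (a : α → M) : Prop :=
  ∃ c : ℕ → M, θ.Realize (Sum.elim a c)

variable (L) in
/-- Every existential formula true of `b` in `N` is true of `a` in `M`. -/
def ExistentialTransfer (b : α → N) (a : α → M) : Prop :=
  ∀ θ : L.Formula (α ⊕ ℕ), θ.IsQF → ExRealize θ b → ExRealize θ a

theorem isQF_iInf {ι : Type*} [Finite ι] {θ : ι → L.Formula α} (hθ : ∀ i, (θ i).IsQF) :
    (Formula.iInf θ).IsQF := by
  have isQF_foldr (l : List ι) : ((l.map θ).foldr (· ⊓ ·) ⊤).IsQF := by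
    induction l with
    | nil => exact IsQF.top
    | cons i l ih => exact (hθ i).inf ih
  exact isQF_foldr _

theorem isQF_iSup {ι : Type*} [Finite ι] {θ : ι → L.Formula α} (hθ : ∀ i, (θ i).IsQF) :
    (Formula.iSup θ).IsQF := by
  have isQF_foldr (l : List ι) : ((l.map θ).foldr (· ⊔ ·) ⊥).IsQF := by
    induction l with
    | nil => exact isQF_bot
    | cons i l ih => exact (hθ i).sup ih
  exact isQF_foldr _

theorem exRealize_iSup {ι : Type*} [Finite ι] {θ : ι → L.Formula (α ⊕ ℕ)} {a : α → M} :
    ExRealize (Formula.iSup θ) a ↔ ∃ i, ExRealize (θ i) a := by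
  simp only [ExRealize, Formula.realize_iSup]
  exact exists_comm

/-- The matrix of the conjunction of the existential formulas with matrices `θ i`, in which the
quantified variables of distinct `θ i` have been renamed apart. -/
noncomputable def exConj {ι : Type*} [Finite ι] (θ : ι → L.Formula (α ⊕ ℕ)) :
    L.Formula (α ⊕ ℕ) :=
  Formula.iInf fun i =>
    (θ i).relabel (Sum.map id fun m => (exists_injective_nat (ι × ℕ)).choose (i, m))

theorem isQF_exConj {ι : Type*} [Finite ι] {θ : ι → L.Formula (α ⊕ ℕ)}
    (hθ : ∀ i, (θ i).IsQF) : (exConj θ).IsQF :=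
  isQF_iInf fun i => (hθ i).relabel _

theorem exRealize_exConj {ι : Type*} [Finite ι] [Nonempty M] {θ : ι → L.Formula (α ⊕ ℕ)}
    {a : α → M} : ExRealize (exConj θ) a ↔ ∀ i, ExRealize (θ i) a := by
  have code_injective := (exists_injective_nat (ι × ℕ)).choose_spec
  simp only [ExRealize, exConj, Formula.realize_iInf, Formula.realize_relabel,
    Sum.elim_comp_map, Function.comp_id]
  constructor
  · rintro ⟨c, hc⟩ i
    exact ⟨_, hc i⟩
  · intro h
    choose c hc using h
    refine ⟨Function.extend (exists_injective_nat (ι × ℕ)).choose (Function.uncurry c)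
      fun _ => Classical.arbitrary M, fun i => ?_⟩
    convert hc i using 2
    exact funext fun m => code_injective.extend_apply _ _ (i, m)

theorem realize_congr_of_freeVarFinset [DecidableEq α] {θ : L.Formula α} {v v' : α → M}
    (h : ∀ i ∈ θ.freeVarFinset, v i = v' i) : θ.Realize v ↔ θ.Realize v' :=
  (realize_restrictFreeVar (f := Subtype.val) v fun _ => rfl).symm.trans
    (realize_restrictFreeVar v' fun i => h i i.2)

theorem exists_exRealize_iff_exists_fin (θ : L.Formula (α ⊕ ℕ)) :
    ∃ N : ℕ, ∀ (M : Type w) [L.Structure M] (a : α → M),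
      ExRealize θ a ↔
        ∃ y : Fin (N + 1) → M, θ.Realize (Sum.elim a (y ∘ Fin.ofNat (N + 1))) := by
  classical
  refine ⟨θ.freeVarFinset.sup (Sum.elim 0 id), fun M _ a => ⟨?_, fun ⟨y, hy⟩ => ⟨_, hy⟩⟩⟩
  rintro ⟨c, hc⟩
  refine ⟨fun i => c i, (realize_congr_of_freeVarFinset ?_).1 hc⟩
  rintro (i | m) hm
  · rfl
  · have hle : m ≤ θ.freeVarFinset.sup (Sum.elim 0 id) :=
      Finset.le_sup (f := Sum.elim 0 id) hm
    simp [Nat.mod_eq_of_lt (Nat.lt_succ_of_le hle)]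

theorem exists_forallExistsSentence_iff_exRealize {k : ℕ} {θ : L.Formula (Fin k ⊕ ℕ)}
    (hθ : θ.IsQF) :
    ∃ (n : ℕ) (ψ : L.BoundedFormula Empty (k + n)), ψ.IsQF ∧
      ∀ (M : Type w) [L.Structure M],
        M ⊨ forallExistsSentence k n ψ ↔ ∀ a : Fin k → M, ExRealize θ a := by
  obtain ⟨N, hN⟩ := exists_exRealize_iff_exists_fin.{u, v, w} θ
  let toBound : Fin k ⊕ ℕ → Empty ⊕ Fin (k + (N + 1)) :=
    Sum.inr ∘ Sum.elim (Fin.castAdd (N + 1)) (Fin.natAdd k ∘ Fin.ofNat (N + 1))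
  refine ⟨N + 1, BoundedFormula.relabel toBound θ, hθ.relabel toBound, fun M _ => ?_⟩
  rw [realize_forallExistsSentence default]
  refine forall_congr' fun a => ?_
  rw [realize_exsFrom, hN]
  refine exists_congr fun y => (realize_relabel (φ := θ) (g := toBound)
    (xs := (Fin.append a y : Fin (k + (N + 1)) → M))).trans ?_
  rw [Formula.Realize]
  congr! 1
  ext (i | m) <;> simp [toBound]

end Existential

section Embeddings

variable {M N : Type*} [L.Structure M] [L.Structure N]

theorem exists_embedding_of_forall_isQF {γ : Type*} {x : γ → N} {y : γ → M}
    (hx : Function.Surjective x)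
    (h : ∀ θ : L.Formula γ, θ.IsQF → θ.Realize x → θ.Realize y) :
    ∃ f : N ↪[L] M, f ∘ x = y := by
  have h_iff (θ : L.Formula γ) (hθ : θ.IsQF) : θ.Realize y ↔ θ.Realize x :=
    ⟨fun hy => by_contra fun hnx =>
      Formula.realize_not.1 (h θ.not hθ.not (Formula.realize_not.2 hnx)) hy, h θ hθ⟩
  have term_eq_iff (t₁ t₂ : L.Term γ) :
      t₁.realize y = t₂.realize y ↔ t₁.realize x = t₂.realize x := by
    simpa only [Formula.realize_equal] using
      h_iff (t₁.equal t₂) (IsAtomic.equal _ _).isQF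
  choose s hs using hx
  have y_section (t : L.Term γ) : y (s (t.realize x)) = t.realize y :=
    (term_eq_iff (Term.var _) t).2 (hs _)
  refine ⟨⟨⟨y ∘ s, fun p q hpq => ?_⟩, fun g z => ?_, fun r z => ?_⟩, ?_⟩
  · simpa [hs] using (term_eq_iff (Term.var (s p)) (Term.var (s q))).1 hpq
  · simpa [hs, Function.comp_def] using y_section (Term.func g fun i => Term.var (s (z i)))
  · simpa [hs, Function.comp_def] using
      h_iff (r.formula fun i => Term.var (s (z i))) (r.isQF _)
  · exact funext fun i => y_section (Term.var i)

theorem exists_countable_elementarySubstructure [Countable L.Symbols] {s : Set M}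
    (hs : s.Countable) : ∃ S : L.ElementarySubstructure M, s ⊆ S ∧ Countable S := by
  by_cases hM : Countable M
  · exact ⟨⊤, fun _ _ => trivial, inferInstance⟩
  · rw [← Cardinal.mk_le_aleph0_iff, not_le] at hM
    obtain ⟨S, hsS, hS⟩ := L.exists_elementarySubstructure_card_eq s Cardinal.aleph0.{0} le_rfl
      (by simpa using hs) (by
        rw [Cardinal.lift_aleph0, Cardinal.lift_uzero]
        exact Cardinal.mk_le_aleph0_iff.2 inferInstance)
      (by simpa using hM.le)
    refine ⟨S, hsS, Cardinal.mk_le_aleph0_iff.1 (le_of_eq ?_)⟩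
    simpa using hS

variable (L M) in
/-- Every countable set of formulas in countably many variables, with parameters from `M`, is
realized in `M` as soon as all its finite subsets are. For a countable language this is
`ℵ₁`-saturation. -/
def IsCountablySaturated : Prop :=
  ∀ ⦃α : Type⦄ (a : α → M) (S : Set (L.Formula (α ⊕ ℕ))), S.Countable →
    (∀ F ⊆ S, F.Finite → ∃ c : ℕ → M, ∀ θ ∈ F, θ.Realize (Sum.elim a c)) →
    ∃ c : ℕ → M, ∀ θ ∈ S, θ.Realize (Sum.elim a c)

theorem IsCountablySaturated.exists_embedding [Countable L.Symbols] [Countable N] [Nonempty N]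
    {α : Type} [Countable α] (hM : IsCountablySaturated L M) {b : α → N} {a : α → M}
    (h : ExistentialTransfer L b a) : ∃ f : N ↪[L] M, f ∘ b = a := by
  obtain ⟨c, hc⟩ := exists_surjective_nat N
  obtain ⟨d, hd⟩ := hM a {θ | θ.IsQF ∧ θ.Realize (Sum.elim b c)} (Set.to_countable _) (by
    intro F hF hfin
    have := hfin.to_subtype
    obtain ⟨d, hd⟩ := h (Formula.iInf ((↑) : F → L.Formula (α ⊕ ℕ)))
      (isQF_iInf fun θ => (hF θ.2).1) ⟨c, Formula.realize_iInf.2 fun θ => (hF θ.2).2⟩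
    exact ⟨d, fun θ hθ => Formula.realize_iInf.1 hd ⟨θ, hθ⟩⟩)
  obtain ⟨f, hf⟩ := exists_embedding_of_forall_isQF (x := Sum.elim b c) (y := Sum.elim a d)
    (fun z => (hc z).imp' Sum.inr fun _ => id) fun θ hθ hθc => hd θ ⟨hθ, hθc⟩
  exact ⟨f, funext fun i => congrFun hf (Sum.inl i)⟩

end Embeddings

section Ultraproducts

variable {ι : Type*} {U : Ultrafilter ι} {M : ι → Type w} {α β : Type*}

/-- The tuple of the ultraproduct represented by a family of tuples of its factors. -/
def ultraTuple (U : Ultrafilter ι) (x : ∀ i, α → M i) : α → (U : Filter ι).Product M :=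
  fun j => ((fun i => x i j : ∀ i, M i) : (U : Filter ι).Product M)

theorem ultraTuple_surjective :
    Function.Surjective (ultraTuple U : (∀ i, α → M i) → α → (U : Filter ι).Product M) :=
  fun a => ⟨fun i j => (a j).out i, funext fun j => (a j).out_eq⟩

theorem sumElim_ultraTuple (x : ∀ i, α → M i) (y : ∀ i, β → M i) :
    Sum.elim (ultraTuple U x) (ultraTuple U y) = ultraTuple U fun i => Sum.elim (x i) (y i) := by
  ext (j | j) <;> rfl

variable [∀ i, L.Structure (M i)] [∀ i, Nonempty (M i)]

theorem realize_ultraTuple {θ : L.Formula α} {x : ∀ i, α → M i} :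
    θ.Realize (ultraTuple U x) ↔ ∀ᶠ i in U, θ.Realize (x i) :=
  Ultraproduct.realize_formula_cast θ fun j i => x i j

theorem exRealize_ultraTuple {θ : L.Formula (α ⊕ ℕ)} {x : ∀ i, α → M i} :
    ExRealize θ (ultraTuple U x) ↔ ∀ᶠ i in U, ExRealize θ (x i) := by
  simp only [ExRealize, ultraTuple_surjective.exists, sumElim_ultraTuple, realize_ultraTuple]
  refine ⟨fun ⟨c, hc⟩ => hc.mono fun i hi => ⟨c i, hi⟩, fun h => ?_⟩
  exact ⟨fun i => Classical.epsilon fun c => θ.Realize (Sum.elim (x i) c),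
    h.mono fun i hi => Classical.epsilon_spec hi⟩

theorem ultraproduct_models {T : L.Theory} (h : ∀ i, M i ⊨ T) : (U : Filter ι).Product M ⊨ T :=
  ⟨fun σ hσ => (Ultraproduct.sentence_realize σ).2
    (Eventually.of_forall fun i => (h i).realize_of_mem σ hσ)⟩

theorem exists_eventually_of_forall_eventually_exists {l : Filter ℕ} (hl : l ≤ atTop)
    {X : ℕ → Type*} [∀ i, Nonempty (X i)] {p : ∀ i, ℕ → X i → Prop}
    (hp : ∀ i x, Antitone fun n => p i n x) (h : ∀ n, ∀ᶠ i in l, ∃ x, p i n x) :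
    ∃ x : ∀ i, X i, ∀ n, ∀ᶠ i in l, p i n (x i) := by
  classical
  have best_choice (i : ℕ) : ∃ x, ∀ n ≤ i, (∃ y, p i n y) → p i n x := by
    let m := Nat.findGreatest (fun n => ∃ y, p i n y) i
    by_cases hm : ∃ y, p i m y
    · obtain ⟨x, hx⟩ := hm
      exact ⟨x, fun n hn hy => hp i x (Nat.le_findGreatest hn hy) hx⟩
    · exact ⟨Classical.arbitrary _, fun n hn hy =>
        (hm (Nat.findGreatest_spec (P := fun n => ∃ y, p i n y) hn hy)).elim⟩
  choose x hx using best_choice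
  refine ⟨x, fun n => ?_⟩
  filter_upwards [hl (eventually_ge_atTop n), h n] with i hi hn using hx i n hi hn

theorem isCountablySaturated_ultraproduct {U : Ultrafilter ℕ} (hU : (U : Filter ℕ) ≤ atTop)
    {M : ℕ → Type w} [∀ i, L.Structure (M i)] [∀ i, Nonempty (M i)] :
    IsCountablySaturated L ((U : Filter ℕ).Product M) := by
  intro α a S hS h
  obtain ⟨a, rfl⟩ := ultraTuple_surjective a
  simp only [ultraTuple_surjective.exists, sumElim_ultraTuple, realize_ultraTuple] at h ⊢
  obtain ⟨t, ht⟩ := Set.countable_iff_exists_subset_range.1 hS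
  obtain ⟨c, hc⟩ := exists_eventually_of_forall_eventually_exists hU
    (p := fun i n (c : ℕ → M i) => ∀ θ ∈ S ∩ t '' Set.Iic n, θ.Realize (Sum.elim (a i) c))
    (fun i c m n hmn hn θ hθ => hn θ ⟨hθ.1, Set.image_mono (Set.Iic_subset_Iic.2 hmn) hθ.2⟩)
    (fun n => by
      have hfin : (S ∩ t '' Set.Iic n).Finite := ((Set.finite_Iic n).image t).inter_of_right S
      obtain ⟨c, hc⟩ := h _ Set.inter_subset_left hfin
      exact ((eventually_all_finite hfin).2 hc).mono fun i hi => ⟨c i, hi⟩)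
  refine ⟨c, fun θ hθ => ?_⟩
  obtain ⟨n, rfl⟩ := ht hθ
  exact (hc n).mono fun i hi => hi _ ⟨hθ, Set.mem_image_of_mem t Set.self_mem_Iic⟩

end Ultraproducts

section Consequences

variable {T V : L.Theory} {φ : L.Sentence} {k : ℕ}

/-- The matrices `θ` such that the sentence `∀ x, ∃ y₀ y₁ …, θ(x, y₀, y₁, …)`, with the universally
quantified variables indexed by `α`, holds in all models of `T` in `Type w`. -/
def forallExistsConsequences (T : L.Theory) (α : Type*) : Set (L.Formula (α ⊕ ℕ)) :=
  {θ | θ.IsQF ∧ ∀ (N : Type w) [L.Structure N] [Nonempty N], N ⊨ T →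
    ∀ b : α → N, ExRealize θ b}

theorem exists_model_existentialTransfer [Countable L.Symbols] {α : Type} [Countable α]
    {M : Type*} [L.Structure M] {a : α → M}
    (h : ∀ θ ∈ forallExistsConsequences.{u, v, w} T α, ExRealize θ a) :
    ∃ (N : Type w) (_ : L.Structure N) (_ : Nonempty N) (b : α → N),
      N ⊨ T ∧ ExistentialTransfer L b a := by
  let S : Set (L.Formula (α ⊕ ℕ)) := {θ | θ.IsQF ∧ ¬ ExRealize θ a}
  obtain ⟨t, ht⟩ := exists_surjective_nat (L.Formula (α ⊕ ℕ))
  have exists_approx (n : ℕ) : ∃ (N : Type w) (_ : L.Structure N) (_ : Nonempty N) (b : α → N),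
      N ⊨ T ∧ ∀ θ ∈ S ∩ t '' Set.Iic n, ¬ ExRealize θ b := by
    have : Finite ↥(S ∩ t '' Set.Iic n) := ((Set.finite_Iic n).image t).inter_of_right S
    let χ := Formula.iSup ((↑) : ↥(S ∩ t '' Set.Iic n) → L.Formula (α ⊕ ℕ))
    have hχ : χ ∉ forallExistsConsequences.{u, v, w} T α := fun hmem => by
      obtain ⟨θ, hθ⟩ := exRealize_iSup.1 (h χ hmem)
      exact θ.2.1.2 hθ
    by_contra! hno
    refine hχ ⟨isQF_iSup fun θ => θ.2.1.1, fun N _ _ hN b => exRealize_iSup.2 ?_⟩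
    obtain ⟨θ, hθ, hb⟩ := hno N inferInstance inferInstance b hN
    exact ⟨⟨θ, hθ⟩, hb⟩
  choose N _ _ b hN hb using exists_approx
  refine ⟨((hyperfilter ℕ : Ultrafilter ℕ) : Filter ℕ).Product N, inferInstance, inferInstance,
    ultraTuple _ b, ultraproduct_models hN, fun θ hθ hθb => by_contra fun hθa => ?_⟩
  obtain ⟨n, rfl⟩ := ht θ
  obtain ⟨i, hi, hni⟩ := ((exRealize_ultraTuple.1 hθb).and
    (Nat.hyperfilter_le_atTop (eventually_ge_atTop n))).exists
  exact hb i _ ⟨⟨hθ, hθa⟩, Set.mem_image_of_mem t hni⟩ hi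

theorem exists_countable_model_existentialTransfer [Countable L.Symbols] {α : Type} [Countable α]
    {M : Type*} [L.Structure M] {a : α → M}
    (h : ∀ θ ∈ forallExistsConsequences.{u, v, w} T α, ExRealize θ a) :
    ∃ (N : Type w) (_ : L.Structure N) (_ : Nonempty N) (_ : Countable N) (b : α → N),
      N ⊨ T ∧ ExistentialTransfer L b a := by
  obtain ⟨N, _, hne, b, hN, hb⟩ := exists_model_existentialTransfer.{u, v, w} h
  obtain ⟨S, hbS, hS⟩ := exists_countable_elementarySubstructure (L := L) (Set.countable_range b)
  refine ⟨S, inferInstance, S.elementarilyEquivalent.nonempty_iff.2 hne, hS,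
    fun i => ⟨b i, hbS (Set.mem_range_self i)⟩, (S.theory_model_iff T).2 hN, ?_⟩
  rintro θ hθ ⟨c, hc⟩
  refine hb θ hθ ⟨S.subtype ∘ c, ?_⟩
  rw [← S.subtype.map_formula, Sum.comp_elim] at hc
  exact hc

theorem IsCountablySaturated.exists_substructure_models [Countable L.Symbols] {α : Type}
    [Countable α] {P : Type w} [L.Structure P] (hP : IsCountablySaturated L P) {a : α → P}
    (h : ∀ θ ∈ forallExistsConsequences.{u, v, w} T α, ExRealize θ a) :
    ∃ N : L.Substructure P, (N : Set P).Nonempty ∧ N ⊨ T ∧ ∀ i, a i ∈ N := by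
  obtain ⟨N, _, _, _, b, hN, hb⟩ := exists_countable_model_existentialTransfer h
  obtain ⟨f, rfl⟩ := hP.exists_embedding hb
  exact ⟨f.toHom.range, Set.range_nonempty f, StrongHomClass.theory_model f.equivRange,
    fun i => f.toHom.mem_range_self (b i)⟩

theorem KExtensionClosed.realize_of_isCountablySaturated [Countable L.Symbols]
    (hφ : KExtensionClosed.{u, v, w} V k φ) {P : Type w} [L.Structure P] [Nonempty P]
    (hP : IsCountablySaturated L P) (hV : P ⊨ V)
    (hcons : ∀ θ ∈ forallExistsConsequences.{u, v, w} (V ∪ {φ}) (Fin k),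
      ∀ a : Fin k → P, ExRealize θ a) : P ⊨ φ := by
  refine hφ P hV {N | (N : Set P).Nonempty ∧ N ⊨ V ∧ N ⊨ φ}
    (isKAryCover_iff_forall_tuple.2 ⟨fun N hN => hN.1, fun a => ?_⟩) fun N hN => hN.2
  obtain ⟨N, hne, hN, ha⟩ := hP.exists_substructure_models fun θ hθ => hcons θ hθ a
  rw [Theory.model_union_iff, Theory.model_singleton_iff] at hN
  exact ⟨N, ⟨hne, hN⟩, ha⟩

/-- `φ` is equivalent to a `∀^k∃*` sentence in all models of `V` in `Type w`. -/
def IsForallExistsModulo (V : L.Theory) (k : ℕ) (φ : L.Sentence) : Prop :=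
  ∃ (n : ℕ) (ψ : L.BoundedFormula Empty (k + n)), ψ.IsQF ∧
    ∀ (M : Type w) [L.Structure M] [Nonempty M], M ⊨ V →
      (M ⊨ φ ↔ M ⊨ forallExistsSentence k n ψ)

theorem isForallExistsModulo_of_finite {F : Set (L.Formula (Fin k ⊕ ℕ))} (hfin : F.Finite)
    (hF : F ⊆ forallExistsConsequences.{u, v, w} (V ∪ {φ}) (Fin k))
    (h : ∀ (M : Type w) [L.Structure M] [Nonempty M], M ⊨ V →
      (∀ θ ∈ F, ∀ a : Fin k → M, ExRealize θ a) → M ⊨ φ) :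
    IsForallExistsModulo.{u, v, w} V k φ := by
  have := hfin.to_subtype
  obtain ⟨n, ψ, hψ, realize_ψ⟩ := exists_forallExistsSentence_iff_exRealize.{u, v, w}
    (isQF_exConj (θ := ((↑) : F → L.Formula (Fin k ⊕ ℕ))) fun θ => (hF θ.2).1)
  refine ⟨n, ψ, hψ, fun M _ _ hV => ?_⟩
  simp only [realize_ψ, exRealize_exConj]
  constructor
  · intro hφ a θ
    have hT : M ⊨ V ∪ {φ} := Theory.model_union_iff.2 ⟨hV, Theory.model_singleton_iff.2 hφ⟩
    exact (hF θ.2).2 M hT a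
  · exact fun hM => h M hV fun θ hθ a => hM a ⟨θ, hθ⟩

theorem KExtensionClosed.isForallExistsModulo [Countable L.Symbols]
    (hφ : KExtensionClosed.{u, v, w} V k φ) : IsForallExistsModulo.{u, v, w} V k φ := by
  by_contra hnot
  let Γ := forallExistsConsequences.{u, v, w} (V ∪ {φ}) (Fin k)
  obtain ⟨t, ht⟩ := exists_surjective_nat (L.Formula (Fin k ⊕ ℕ))
  have exists_countermodel (n : ℕ) : ∃ (M : Type w) (_ : L.Structure M) (_ : Nonempty M),
      M ⊨ V ∧ (∀ θ ∈ Γ ∩ t '' Set.Iic n, ∀ a : Fin k → M, ExRealize θ a) ∧ ¬ M ⊨ φ := by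
    by_contra! hno
    exact hnot (isForallExistsModulo_of_finite (((Set.finite_Iic n).image t).inter_of_right Γ)
      Set.inter_subset_left fun M _ _ hV => hno M inferInstance inferInstance hV)
  choose M _ _ hV hΓ hnφ using exists_countermodel
  let P := ((hyperfilter ℕ : Ultrafilter ℕ) : Filter ℕ).Product M
  have hPΓ : ∀ θ ∈ Γ, ∀ a : Fin k → P, ExRealize θ a := by
    intro θ hθ a
    obtain ⟨a, rfl⟩ := ultraTuple_surjective a
    obtain ⟨n, rfl⟩ := ht θ
    refine exRealize_ultraTuple.2 ?_
    filter_upwards [Nat.hyperfilter_le_atTop (eventually_ge_atTop n)] with i hi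
    exact hΓ i _ ⟨hθ, Set.mem_image_of_mem t hi⟩ (a i)
  have hPφ : P ⊨ φ := hφ.realize_of_isCountablySaturated
    (isCountablySaturated_ultraproduct Nat.hyperfilter_le_atTop) (ultraproduct_models hV) hPΓ
  obtain ⟨i, hi⟩ := ((Ultraproduct.sentence_realize φ).1 hPφ).exists
  exact hnφ i hi

theorem IsForallExistsModulo.kExtensionClosed (hφ : IsForallExistsModulo.{u, v, w} V k φ) :
    KExtensionClosed.{u, v, w} V k φ := by
  obtain ⟨n, ψ, hψ, h⟩ := hφ
  intro M _ _ hV R hR hRφ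
  obtain ⟨hne, hcov⟩ := isKAryCover_iff_forall_tuple.1 hR
  rw [h M hV, realize_forallExistsSentence default]
  intro a
  obtain ⟨N, hNR, haN⟩ := hcov a
  have := (hne N hNR).to_subtype
  obtain ⟨hNV, hNφ⟩ := hRφ N hNR
  rw [h N hNV, realize_forallExistsSentence default] at hNφ
  rw [← Subsingleton.elim (N.subtype ∘ default) default]
  exact (isExistential_exsFrom k hψ.isExistential).realize_embedding N.subtype
    (hNφ fun i => ⟨a i, haN i⟩)

end Consequences

theorem glt_k_extension_closed_general [Countable L.Symbols] (V : L.Theory) (φ : L.Sentence)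
    (k : ℕ) :
    KExtensionClosed.{u, v, w} V k φ ↔
      ∃ (n : ℕ) (ψ : L.BoundedFormula Empty (k + n)), ψ.IsQF ∧
        ∀ (M : Type w) [L.Structure M] [Nonempty M], M ⊨ V →
          (M ⊨ φ ↔ M ⊨ forallExistsSentence k n ψ) :=
  ⟨KExtensionClosed.isForallExistsModulo, IsForallExistsModulo.kExtensionClosed⟩

/-- **Generalized Łoś–Tarski theorem `GLT(k)`, extension-closed direction** (for sentences):
over arbitrary structures, a sentence `φ` is `k`-extension closed modulo a theory `V` iff it is
equivalent modulo `V` to a `∀^k∃*` sentence `∀x₁…∀x_k ∃y₁…∃y_n ψ` with `ψ` quantifier-free. -/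
theorem glt_k_extension_closed (hfin : Finite L.Symbols) (V : L.Theory) (φ : L.Sentence)
    (k : ℕ) :
    KExtensionClosed.{u, v, w} V k φ ↔
      ∃ (n : ℕ) (ψ : L.BoundedFormula Empty (k + n)), ψ.IsQF ∧
        ∀ (M : Type w) [L.Structure M] [Nonempty M], M ⊨ V →
          (M ⊨ φ ↔ M ⊨ forallExistsSentence k n ψ) := by
  have := hfin
  exact glt_k_extension_closed_general V φ k

end GLTPaper
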